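/- Let k ≥ 1, r ≥ 2k+1 and n ≥ 3k+1 be integers, let A be an r×n sign matrix, and let P be a plain travel of A. If P makes a downward move from row r−2k to row r−2k+1 at a column j ≤ n−3k, then P is not k-neighborly. -/

import Mathlib

/-- An `r × n` sign matrix: entries in `{+1, -1}` (1-indexed: `1 ≤ i ≤ r`, `1 ≤ j ≤ n`). -/
def IsSignMatrix (r n : ℕ) (A : ℕ → ℕ → ℤ) : Prop :=
  ∀ i j, 1 ≤ i → i ≤ r → 1 ≤ j → j ≤ n → A i j = 1 ∨ A i j = -1

/-- `A_S`: the matrix obtained from `A` by negating every entry of each column in `S`. -/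
def reorient (A : ℕ → ℕ → ℤ) (S : Finset ℕ) : ℕ → ℕ → ℤ :=
  fun i j => if j ∈ S then -A i j else A i j

/-- The first column `c'` with `c < c' ≤ n` where row `i` changes sign relative to
entry `a_{i,c}`, if such a column exists. -/
def rowChange (A : ℕ → ℕ → ℤ) (n i c : ℕ) : Option ℕ :=
  (List.range (n + 1)).find? fun c' => decide (c < c' ∧ A i c' ≠ A i c)

/-- `ttEntry A n i` is the column at which the top travel of `A` enters row `i`
(rows and columns 1-indexed): the travel enters row 1 at column 1, and, having entered
row `i` at column `c`, it enters row `i+1` at the first sign change of row `i` after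
column `c` (if any).  The value `some` at the "virtual" row `r+1` means the top travel
had a sign change in the bottom row `r`, i.e. the top travel is positive. -/
def ttEntry (A : ℕ → ℕ → ℤ) (n : ℕ) : ℕ → Option ℕ
  | 0 => none
  | 1 => some 1
  | i + 2 => (ttEntry A n (i + 1)).bind (rowChange A n (i + 1))

/-- The top travel of the `r × n` sign matrix `A` is positive: it contains two
horizontally consecutive entries of row `r` with opposite signs. -/
def ttPositive (A : ℕ → ℕ → ℤ) (r n : ℕ) : Prop :=
  (ttEntry A n (r + 1)).isSome

/-- `A` is `k`-neighborly: for every set `S` of at most `k` columns, the top travel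
of `A_S` is not positive. -/
def IsNeighborly (A : ℕ → ℕ → ℤ) (r n k : ℕ) : Prop :=
  ∀ S : Finset ℕ, S ⊆ Finset.Icc 1 n → S.card ≤ k → ¬ ttPositive (reorient A S) r n

/-- A plain travel of an `r × n` sign matrix, identified with the set `D` of columns of
its downward (vertical) moves: the columns `2 ≤ j₁ < ⋯ < j_{s-1} ≤ n` with `s ≤ r`. -/
def IsPlainTravel (r n : ℕ) (D : Finset ℕ) : Prop :=
  D ⊆ Finset.Icc 2 n ∧ D.card ≤ r - 1

/-- The top travel of `A` follows exactly the plain travel with downward-move columns `D`: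
it makes its downward moves precisely at the columns of `D` (entering rows `2, …, |D|+1`
there) and then ends at column `n` in row `|D|+1` without a further sign change. -/
def ttFollows (A : ℕ → ℕ → ℤ) (n : ℕ) (D : Finset ℕ) : Prop :=
  ttEntry A n (D.card + 2) = none ∧
  ∀ c, c ∈ D ↔ ∃ i, 2 ≤ i ∧ i ≤ D.card + 1 ∧ ttEntry A n i = some c

/-- The plain travel `D` of `A` is `k`-neighborly: there is a set `R` of columns such that
the top travel of `A_R` follows exactly the path `D` and `A_R` is a `k`-neighborly matrix. -/
def IsNeighborlyTravel (A : ℕ → ℕ → ℤ) (r n k : ℕ) (D : Finset ℕ) : Prop :=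
  ∃ R : Finset ℕ, R ⊆ Finset.Icc 1 n ∧ ttFollows (reorient A R) n D ∧
    IsNeighborly (reorient A R) r n k

/-!
Suppose the top travel enters row `i` at column `c`. Negating a single one of the columns `c + 1`,
`c + 2`, `c + 3` is enough to push it two rows down without leaving these three columns: if row `i`
changes by column `c + 2`, at `c₁` say, then negating column `c₁ + 1` if necessary forces the next
change there; if row `i` is constant on `c, c + 1, c + 2`, negate `c + 2` or `c + 1` according to
whether row `i + 1` agrees at `c + 2` and `c + 3`. None of this alters the travel before column
`c + 1`, so after `k` repetitions at most `k` columns are negated and `3k` columns used to descend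
`2k` rows. A travel leaving row `r - 2k` at a column `j ≤ n - 3k` is thus made positive.
-/

/-- `c'` is the first place after `c` at which the sequence `f` differs from `f c`. With `f` a row
of a matrix, these are the horizontal stretches of the top travel. -/
def IsFirstChange {α : Type*} (f : ℕ → α) (c c' : ℕ) : Prop :=
  c < c' ∧ f c' ≠ f c ∧ ∀ x, c < x → x < c' → f x = f c

section FirstChange

variable {α : Type*} {f g : ℕ → α} {c c' x : ℕ}

theorem isFirstChange_succ (h : f (c + 1) ≠ f c) : IsFirstChange f c (c + 1) :=
  ⟨c.lt_succ_self, h, fun _ _ _ => by omega⟩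

theorem exists_isFirstChange_le (hcx : c < x) (h : f x ≠ f c) :
    ∃ c' ≤ x, IsFirstChange f c c' := by
  classical
  have hex : ∃ y, c < y ∧ f y ≠ f c := ⟨x, hcx, h⟩
  obtain ⟨hlt, hne⟩ := Nat.find_spec hex
  refine ⟨Nat.find hex, Nat.find_le ⟨hcx, h⟩, hlt, hne, fun y hcy hy => ?_⟩
  by_contra hyne
  exact Nat.find_min hex hy ⟨hcy, hyne⟩

theorem IsFirstChange.congr (h : IsFirstChange f c c')
    (hfg : ∀ x, c ≤ x → x ≤ c' → g x = f x) : IsFirstChange g c c' := by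
  obtain ⟨hlt, hne, hconst⟩ := h
  have hc : g c = f c := hfg c le_rfl hlt.le
  refine ⟨hlt, ?_, fun x hcx hx => ?_⟩
  · rwa [hfg c' hlt.le le_rfl, hc]
  · rw [hfg x hcx.le hx.le, hc, hconst x hcx hx]

end FirstChange

section Reorient

variable {A : ℕ → ℕ → ℤ} {S T : Finset ℕ} {i i' j c c' : ℕ}

theorem reorient_of_mem (hj : j ∈ S) : reorient A S i j = -A i j := if_pos hj

theorem reorient_of_notMem (hj : j ∉ S) : reorient A S i j = A i j := if_neg hj

theorem reorient_eq_zero_iff : reorient A S i j = 0 ↔ A i j = 0 := by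
  by_cases hj : j ∈ S
  · rw [reorient_of_mem hj, neg_eq_zero]
  · rw [reorient_of_notMem hj]

theorem reorient_empty : reorient A ∅ = A := by
  funext i j
  exact reorient_of_notMem (Finset.notMem_empty j)

theorem reorient_reorient : reorient (reorient A S) T = reorient A (symmDiff S T) := by
  funext i j
  by_cases hS : j ∈ S <;> by_cases hT : j ∈ T <;> simp [reorient, Finset.mem_symmDiff, hS, hT]

theorem isFirstChange_reorient_singleton (hlt : c < c')
    (hconst : ∀ x, c < x → x ≤ c' → A i x = A i c) (h0 : A i c' ≠ 0) :
    IsFirstChange (reorient A {c'} i) c c' := by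
  have hoff : ∀ x, x < c' → reorient A {c'} i x = A i x := fun x hx =>
    reorient_of_notMem (Finset.notMem_singleton.2 hx.ne)
  refine ⟨hlt, ?_, fun x hcx hx => ?_⟩
  · rw [reorient_of_mem (Finset.mem_singleton_self c'), hoff c hlt, ← hconst c' hlt le_rfl]
    exact neg_ne_self.2 h0
  · rw [hoff x hx, hoff c hlt, hconst x hcx hx.le]

theorem exists_reorient_isFirstChange_succ (h : IsFirstChange (A i) c c')
    (h0 : A i' (c' + 1) ≠ 0) :
    ∃ S ⊆ {c' + 1}, IsFirstChange (reorient A S i) c c' ∧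
      IsFirstChange (reorient A S i') c' (c' + 1) := by
  by_cases hb : A i' (c' + 1) = A i' c'
  · refine ⟨{c' + 1}, Finset.Subset.rfl, h.congr fun x _ hx => ?_, ?_⟩
    · exact reorient_of_notMem (by rw [Finset.mem_singleton]; omega)
    · refine isFirstChange_reorient_singleton c'.lt_succ_self (fun x hx hx' => ?_) h0
      rwa [show x = c' + 1 by omega]
  · refine ⟨∅, Finset.empty_subset _, ?_⟩
    rw [reorient_empty]
    exact ⟨h, isFirstChange_succ hb⟩

theorem exists_reorient_singleton_isFirstChange_of_const (h₁ : A i (c + 1) = A i c)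
    (h₂ : A i (c + 2) = A i c) (h0 : A i c ≠ 0) (h0' : A i' (c + 2) ≠ 0) :
    ∃ p ∈ Finset.Ioc c (c + 3), ∃ c₁ c₂, c₂ ≤ c + 3 ∧
      IsFirstChange (reorient A {p} i) c c₁ ∧ IsFirstChange (reorient A {p} i') c₁ c₂ := by
  by_cases hb : A i' (c + 3) = A i' (c + 2)
  · refine ⟨c + 2, by simp, c + 2, c + 3, le_rfl, ?_, isFirstChange_succ ?_⟩
    · refine isFirstChange_reorient_singleton (by omega) (fun x hx hx' => ?_) (h₂ ▸ h0)
      obtain rfl | rfl : x = c + 1 ∨ x = c + 2 := by omega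
      exacts [h₁, h₂]
    · rw [reorient_of_notMem (by simp), reorient_of_mem (by simp), hb]
      exact (neg_ne_self.2 h0').symm
  · have hchange : IsFirstChange (reorient A {c + 1} i) c (c + 1) := by
      refine isFirstChange_reorient_singleton c.lt_succ_self (fun x hx hx' => ?_) (h₁ ▸ h0)
      rwa [show x = c + 1 by omega]
    have hnext : ∃ x, c + 1 < x ∧ x ≤ c + 3 ∧
        reorient A {c + 1} i' x ≠ reorient A {c + 1} i' (c + 1) := by
      by_contra! hconst
      have e₂ := hconst (c + 2) (by omega) (by omega)
      have e₃ := hconst (c + 3) (by omega) (by omega)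
      rw [reorient_of_notMem (by simp)] at e₂ e₃
      exact hb (e₃.trans e₂.symm)
    obtain ⟨x, hx, hx3, hne⟩ := hnext
    obtain ⟨c₂, hc₂, hchange'⟩ := exists_isFirstChange_le hx hne
    exact ⟨c + 1, by simp, c + 1, c₂, hc₂.trans hx3, hchange, hchange'⟩

theorem exists_reorient_isFirstChange_isFirstChange
    (h0 : ∀ x ∈ Finset.Ioc c (c + 3), A i x ≠ 0) (h0' : ∀ x ∈ Finset.Ioc c (c + 3), A i' x ≠ 0) :
    ∃ S ⊆ Finset.Ioc c (c + 3), S.card ≤ 1 ∧ ∃ c₁ c₂, c₂ ≤ c + 3 ∧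
      IsFirstChange (reorient A S i) c c₁ ∧ IsFirstChange (reorient A S i') c₁ c₂ := by
  by_cases hconst : ∀ x, c < x → x ≤ c + 2 → A i x = A i c
  · have h₁ : A i (c + 1) = A i c := hconst (c + 1) (by omega) (by omega)
    have h₂ : A i (c + 2) = A i c := hconst (c + 2) (by omega) le_rfl
    obtain ⟨p, hp, hchanges⟩ := exists_reorient_singleton_isFirstChange_of_const h₁ h₂
      (h₁ ▸ h0 (c + 1) (by simp)) (h0' (c + 2) (by simp))
    exact ⟨{p}, Finset.singleton_subset_iff.2 hp, (Finset.card_singleton p).le, hchanges⟩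
  · push Not at hconst
    obtain ⟨x, hcx, hx, hne⟩ := hconst
    obtain ⟨c₁, hc₁, hchange⟩ := exists_isFirstChange_le hcx hne
    have hmem : c₁ + 1 ∈ Finset.Ioc c (c + 3) :=
      Finset.mem_Ioc.2 ⟨hchange.1.trans c₁.lt_succ_self, by omega⟩
    obtain ⟨S, hS, hchanges⟩ := exists_reorient_isFirstChange_succ hchange (h0' _ hmem)
    exact ⟨S, hS.trans (Finset.singleton_subset_iff.2 hmem),
      (Finset.card_le_card hS).trans (Finset.card_singleton _).le, c₁, c₁ + 1, by omega, hchanges⟩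

end Reorient

section TopTravel

variable {A B : ℕ → ℕ → ℤ} {n i m c c' d : ℕ}

theorem rowChange_eq_some_iff :
    rowChange A n i c = some c' ↔ IsFirstChange (A i) c c' ∧ c' ≤ n := by
  simp only [rowChange, IsFirstChange, List.find?_range_eq_some, decide_eq_true_eq, List.mem_range,
    Bool.not_eq_true', decide_eq_false_iff_not, not_and, not_not, Nat.lt_succ_iff]
  grind

theorem ttEntry_succ_eq_some_iff (hi : 1 ≤ i) :
    ttEntry A n (i + 1) = some c' ↔
      ∃ c, ttEntry A n i = some c ∧ IsFirstChange (A i) c c' ∧ c' ≤ n := by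
  obtain ⟨m, rfl⟩ := Nat.exists_eq_add_of_le' hi
  simp only [ttEntry, Option.bind_eq_some_iff, rowChange_eq_some_iff]

theorem one_le_of_ttEntry_eq_some (h : ttEntry A n i = some c) : 1 ≤ i := by
  rcases i with _ | i
  · simp [ttEntry] at h
  · exact Nat.le_add_left 1 i

theorem ttEntry_congr (h : ttEntry A n i = some c) (hBA : ∀ i' x, x ≤ c → B i' x = A i' x) :
    ttEntry B n i = some c := by
  induction i, one_le_of_ttEntry_eq_some h using Nat.le_induction generalizing c with
  | base => exact h
  | succ i hi ih =>
    obtain ⟨b, hb, hchange, hn⟩ := (ttEntry_succ_eq_some_iff hi).1 h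
    have hbc : b < c := hchange.1
    exact (ttEntry_succ_eq_some_iff hi).2 ⟨b, ih hb fun i' x hx => hBA i' x (hx.trans hbc.le),
      hchange.congr fun x _ hx => hBA i x hx, hn⟩

theorem ttEntry_reorient {S : Finset ℕ} (h : ttEntry A n i = some c) (hS : ∀ x ∈ S, c < x) :
    ttEntry (reorient A S) n i = some c :=
  ttEntry_congr h fun _ _ hx => reorient_of_notMem fun hxS => (hS _ hxS).not_ge hx

theorem exists_ttEntry_eq_some_of_le (h : ttEntry A n i = some c) (hm : 1 ≤ m) (hmi : m ≤ i) :
    ∃ d, ttEntry A n m = some d := by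
  induction i, hmi using Nat.le_induction generalizing c with
  | base => exact ⟨c, h⟩
  | succ i hmi ih =>
    obtain ⟨b, hb, -⟩ := (ttEntry_succ_eq_some_iff (hm.trans hmi)).1 h
    exact ih hb

theorem ttEntry_lt_ttEntry (hm : ttEntry A n m = some d) (hi : ttEntry A n i = some c)
    (hmi : m < i) : d < c := by
  induction i, Nat.succ_le_of_lt hmi using Nat.le_induction generalizing c with
  | base =>
    obtain ⟨b, hb, hchange, -⟩ := (ttEntry_succ_eq_some_iff (one_le_of_ttEntry_eq_some hm)).1 hi
    obtain rfl : d = b := Option.some_injective _ (hm.symm.trans hb)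
    exact hchange.1
  | succ i hmi' ih =>
    obtain ⟨b, hb, hchange, -⟩ := (ttEntry_succ_eq_some_iff (by omega)).1 hi
    exact (ih hb hmi').trans hchange.1

theorem ttEntry_le_ttEntry_iff (hm : ttEntry A n m = some d) (hi : ttEntry A n i = some c) :
    d ≤ c ↔ m ≤ i := by
  refine ⟨fun hdc => ?_, fun hmi => ?_⟩
  · by_contra! him
    exact (ttEntry_lt_ttEntry hi hm him).not_ge hdc
  · obtain rfl | hlt := hmi.eq_or_lt
    · exact (Option.some_injective _ (hm.symm.trans hi)).le
    · exact (ttEntry_lt_ttEntry hm hi hlt).le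

theorem injOn_ttEntry (h : ttEntry A n i = some c) : Set.InjOn (ttEntry A n) (Set.Icc 1 i) := by
  intro a ha b _ hab
  obtain ⟨d, hd⟩ := exists_ttEntry_eq_some_of_le h ha.1 ha.2
  have hd' : ttEntry A n b = some d := hab.symm.trans hd
  exact le_antisymm ((ttEntry_le_ttEntry_iff hd hd').1 le_rfl)
    ((ttEntry_le_ttEntry_iff hd' hd).1 le_rfl)

theorem ttFollows.ttEntry_card_filter_le_add_one {D : Finset ℕ} {j : ℕ} (hF : ttFollows A n D)
    (hj : j ∈ D) : ttEntry A n ((D.filter (· ≤ j)).card + 1) = some j := by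
  obtain ⟨i, hi2, hiD, hi⟩ := (hF.2 j).1 hj
  have himage : (D.filter (· ≤ j)).image some = (Finset.Icc 2 i).image (ttEntry A n) := by
    ext o
    simp only [Finset.mem_image, Finset.mem_filter, Finset.mem_Icc]
    constructor
    · rintro ⟨d, ⟨hdD, hdj⟩, rfl⟩
      obtain ⟨m, hm2, -, hm⟩ := (hF.2 d).1 hdD
      exact ⟨m, ⟨hm2, (ttEntry_le_ttEntry_iff hm hi).1 hdj⟩, hm⟩
    · rintro ⟨m, ⟨hm2, hmi⟩, rfl⟩
      obtain ⟨d, hd⟩ := exists_ttEntry_eq_some_of_le hi (one_le_two.trans hm2) hmi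
      exact ⟨d, ⟨(hF.2 d).2 ⟨m, hm2, hmi.trans hiD, hd⟩, (ttEntry_le_ttEntry_iff hd hi).2 hmi⟩,
        hd.symm⟩
  have hinj : Set.InjOn (ttEntry A n) (Finset.Icc 2 i : Finset ℕ) :=
    (injOn_ttEntry hi).mono fun m hm => by
      rw [Finset.coe_Icc] at hm
      exact ⟨one_le_two.trans hm.1, hm.2⟩
  have hcard : (D.filter (· ≤ j)).card = i - 1 := by
    rw [← Finset.card_image_of_injective _ (Option.some_injective ℕ), himage,
      Finset.card_image_of_injOn hinj, Nat.card_Icc]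
    omega
  rwa [hcard, Nat.sub_add_cancel (one_le_two.trans hi2)]

theorem exists_ttEntry_reorient_add_two (h : ttEntry A n i = some c) (hcn : c + 3 ≤ n)
    (h0 : ∀ i', i ≤ i' → i' < i + 2 → ∀ x, c < x → x ≤ n → A i' x ≠ 0) :
    ∃ S ⊆ Finset.Ioc c n, S.card ≤ 1 ∧
      ∃ c', c < c' ∧ c' ≤ c + 3 ∧ ttEntry (reorient A S) n (i + 2) = some c' := by
  have hne : ∀ i', i ≤ i' → i' < i + 2 → ∀ x ∈ Finset.Ioc c (c + 3), A i' x ≠ 0 :=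
    fun i' hi hi' x hx => h0 i' hi hi' x (Finset.mem_Ioc.1 hx).1 ((Finset.mem_Ioc.1 hx).2.trans hcn)
  obtain ⟨S, hS, hcard, c₁, c₂, hc₂, hchange, hchange'⟩ :=
    exists_reorient_isFirstChange_isFirstChange (hne i le_rfl (by omega))
      (hne (i + 1) (by omega) (by omega))
  have hi : 1 ≤ i := one_le_of_ttEntry_eq_some h
  have h₁₂ : c₁ < c₂ := hchange'.1
  have e₀ : ttEntry (reorient A S) n i = some c :=
    ttEntry_reorient h fun x hx => (Finset.mem_Ioc.1 (hS hx)).1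
  have e₁ : ttEntry (reorient A S) n (i + 1) = some c₁ :=
    (ttEntry_succ_eq_some_iff hi).2 ⟨c, e₀, hchange, by omega⟩
  have e₂ : ttEntry (reorient A S) n (i + 2) = some c₂ :=
    (ttEntry_succ_eq_some_iff (hi.trans i.le_succ)).2 ⟨c₁, e₁, hchange', hc₂.trans hcn⟩
  exact ⟨S, hS.trans (Finset.Ioc_subset_Ioc_right hcn), hcard, c₂, hchange.1.trans h₁₂, hc₂, e₂⟩

theorem exists_ttEntry_reorient_add_two_mul {k : ℕ} (h : ttEntry A n i = some c)
    (hcn : c + 3 * k ≤ n)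
    (h0 : ∀ i', i ≤ i' → i' < i + 2 * k → ∀ x, c < x → x ≤ n → A i' x ≠ 0) :
    ∃ S ⊆ Finset.Ioc c n, S.card ≤ k ∧ (ttEntry (reorient A S) n (i + 2 * k)).isSome := by
  induction k generalizing A i c with
  | zero =>
    refine ⟨∅, Finset.empty_subset _, le_rfl, ?_⟩
    rw [reorient_empty]
    exact Option.isSome_of_mem h
  | succ k ih =>
    obtain ⟨S, hS, hScard, c', hcc', hc', hentry⟩ := exists_ttEntry_reorient_add_two h (by omega)
      fun i' hi hi' => h0 i' hi (by omega)
    obtain ⟨T, hT, hTcard, hsome⟩ := ih hentry (by omega) fun i' hi hi' x hx hxn =>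
      mt reorient_eq_zero_iff.1 (h0 i' (by omega) (by omega) x (hcc'.trans hx) hxn)
    have hsub : symmDiff S T ⊆ S ∪ T := Finset.symmDiff_subset_union
    refine ⟨symmDiff S T, ?_, ?_, ?_⟩
    · exact hsub.trans (Finset.union_subset hS (hT.trans (Finset.Ioc_subset_Ioc_left hcc'.le)))
    · have := (Finset.card_le_card hsub).trans (Finset.card_union_le S T)
      omega
    · rwa [← reorient_reorient, show i + 2 * (k + 1) = i + 2 + 2 * k by ring]

end TopTravel

theorem IsSignMatrix.ne_zero {r n : ℕ} {A : ℕ → ℕ → ℤ} (hA : IsSignMatrix r n A) {i j : ℕ}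
    (hi : 1 ≤ i) (hir : i ≤ r) (hj : 1 ≤ j) (hjn : j ≤ n) : A i j ≠ 0 := by
  obtain h | h := hA i j hi hir hj hjn <;> rw [h] <;> decide

theorem statement_4_general {k r n : ℕ} {A : ℕ → ℕ → ℤ} {D : Finset ℕ} {j : ℕ}
    (hA : ∀ i, r < i + 2 * k → i ≤ r → ∀ x, j < x → x ≤ n → A i x ≠ 0)
    (hjD : j ∈ D) (hrow : (D.filter (· ≤ j)).card + 2 * k = r) (hj : j + 3 * k ≤ n) :
    ¬ IsNeighborlyTravel A r n k D := by
  rintro ⟨R, -, hF, hN⟩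
  have hentry := hF.ttEntry_card_filter_le_add_one hjD
  obtain ⟨S, hS, hScard, hsome⟩ := exists_ttEntry_reorient_add_two_mul hentry hj
    fun i hi hi' x hx hxn => mt reorient_eq_zero_iff.1 (hA i (by omega) (by omega) x hx hxn)
  have hSn : S ⊆ Finset.Icc 1 n := fun x hx => by
    have := Finset.mem_Ioc.1 (hS hx)
    exact Finset.mem_Icc.2 (by omega)
  have hpos : ttPositive (reorient (reorient A R) S) r n := by
    rwa [ttPositive, ← hrow, add_right_comm]
  exact hN S hSn hScard hpos

/-- Let `k ≥ 1`, `r ≥ 2k+1`, `n ≥ 3k+1`, `A` an `r × n` sign matrix and `P` a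
plain travel of `A` (with downward-move columns `D`).  If `P` makes a downward move from row
`r-2k` to row `r-2k+1` at a column `j ≤ n-3k` (i.e. `j` is the `(r-2k)`-th smallest element
of `D`), then `P` is not `k`-neighborly. -/
theorem statement_4 (k r n : ℕ) (hk : 1 ≤ k) (hr : 2 * k + 1 ≤ r) (hn : 3 * k + 1 ≤ n)
    (A : ℕ → ℕ → ℤ) (hA : IsSignMatrix r n A)
    (D : Finset ℕ) (hD : IsPlainTravel r n D)
    (j : ℕ) (hjD : j ∈ D) (hrow : (D.filter (fun c => c ≤ j)).card = r - 2 * k)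
    (hj : j ≤ n - 3 * k) :
    ¬ IsNeighborlyTravel A r n k D := by
  exact statement_4_general (fun i hi hir x hx hxn => hA.ne_zero (by omega) hir (by omega) hxn)
    hjD (by omega) (by omega)
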